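/- Minimum length of capacity achieving SLDCs (Corollary 4 of the paper, stated as Corollary on lengths): for all integers N ≥ 2 and K ≥ 1, the minimum code length M for which there exists a perfectly smooth locally decodable code (SLDC) with locality N, K source symbols, M coded symbols, and symbol rate R_s = C*(N,K), equals N^K. -/

import Mathlib

open scoped BigOperators

noncomputable section

/-- A finite probability space: a finite type together with a probability mass function. -/
structure FinProbSpace where
  Ω : Type
  [fin : Fintype Ω]
  p : Ω → ℝ
  nonneg : ∀ ω, 0 ≤ p ω
  sum_one : ∑ ω, p ω = 1

attribute [instance] FinProbSpace.fin

namespace FinProbSpace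

variable (P : FinProbSpace)

/-- Probability that the random variable `X` takes the value `a`. -/
def prob {α : Type} [DecidableEq α] (X : P.Ω → α) (a : α) : ℝ :=
  ∑ ω, if X ω = a then P.p ω else 0

/-- Shannon entropy (in bits) of a finitely valued random variable. -/
def H {α : Type} [Fintype α] [DecidableEq α] (X : P.Ω → α) : ℝ :=
  ∑ a, -(P.prob X a * Real.logb 2 (P.prob X a))

/-- Conditional Shannon entropy `H(X | Y) = H(X, Y) - H(Y)` (in bits). -/
def condH {α β : Type} [Fintype α] [DecidableEq α] [Fintype β] [DecidableEq β]
    (X : P.Ω → α) (Y : P.Ω → β) : ℝ :=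
  P.H (fun ω => (X ω, Y ω)) - P.H Y

/-- The tuple random variable `(X_i)_{i ∈ ι}`. -/
def tuple {ι V : Type} (X : ι → P.Ω → V) : P.Ω → ι → V := fun ω i => X i ω

/-- Joint (mutual) independence of a finite family of random variables. -/
def iIndep {ι V : Type} [Fintype ι] [DecidableEq ι] [DecidableEq V] (X : ι → P.Ω → V) : Prop :=
  ∀ a : ι → V, P.prob (P.tuple X) a = ∏ i, P.prob (X i) (a i)

/-- `X` and `Y` contain the same information about everything beyond `Z`:
`H(X | Y, Z) = H(Y | X, Z) = 0`. -/
def sameInfo {α β γ : Type} [Fintype α] [DecidableEq α] [Fintype β] [DecidableEq β]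
    [Fintype γ] [DecidableEq γ] (X : P.Ω → α) (Y : P.Ω → β) (Z : P.Ω → γ) : Prop :=
  P.condH X (fun ω => (Y ω, Z ω)) = 0 ∧ P.condH Y (fun ω => (X ω, Z ω)) = 0

end FinProbSpace

/-- A locally decodable code with `K` source symbols of entropy `Lw`, `M` coded symbols of
entropy `Lx`, and locality `N`. -/
structure LDC (K N M : ℕ) (Lw Lx : ℝ) where
  P : FinProbSpace
  V : Type
  [fV : Fintype V]
  [dV : DecidableEq V]
  V' : Type
  [fV' : Fintype V']
  [dV' : DecidableEq V']
  /-- the source symbols -/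
  W : Fin K → P.Ω → V
  /-- the coded symbols -/
  X : Fin M → P.Ω → V'
  indep : P.iIndep W
  HW : ∀ k, P.H (W k) = Lw
  coded_fn : ∀ m, ∃ f : (Fin K → V) → V', ∀ ω, X m ω = f (fun k => W k ω)
  HX : ∀ m, P.H (X m) = Lx
  /-- the decoding supersets -/
  decSets : Fin K → Finset (Finset (Fin M))
  decSets_nonempty : ∀ k, (decSets k).Nonempty
  decSets_card : ∀ k, ∀ s ∈ decSets k, s.card = N
  decodes : ∀ k, ∀ s ∈ decSets k,
    P.condH (W k) (P.tuple fun i : {x // x ∈ s} => X i.1) = 0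

attribute [instance] LDC.fV LDC.dV LDC.fV' LDC.dV'

/-- A universal LDC: every coded symbol appears in some decoding set of every source symbol. -/
def LDC.IsUniversal {K N M : ℕ} {Lw Lx : ℝ} (C : LDC K N M Lw Lx) : Prop :=
  ∀ (m : Fin M) (k : Fin K), ∃ s ∈ C.decSets k, m ∈ s

/-- A perfectly smooth LDC: for each source symbol, every coded symbol lies in the same
number of decoding sets. -/
def LDC.IsSmooth {K N M : ℕ} {Lw Lx : ℝ} (C : LDC K N M Lw Lx) : Prop :=
  ∀ (k : Fin K) (m m' : Fin M),
    ((C.decSets k).filter (fun s => m ∈ s)).card =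
      ((C.decSets k).filter (fun s => m' ∈ s)).card

/-- `C*(N, K) = N (1 + 1/N + ⋯ + 1/N^{K-1})⁻¹`. -/
def Cstar (N K : ℕ) : ℝ := N / (∑ j ∈ Finset.range K, (1 / (N : ℝ)) ^ j)

/-- An `N`-query information retrieval scheme with `K` messages of entropy `Lw` and
answer sets of sizes `Mn n` with answers of entropy `Lx`. -/
structure IRScheme (K N : ℕ) (Mn : Fin N → ℕ) (Lw Lx : ℝ) where
  P : FinProbSpace
  V : Type
  [fV : Fintype V]
  [dV : DecidableEq V]
  V' : Type
  [fV' : Fintype V']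
  [dV' : DecidableEq V']
  /-- the messages -/
  W : Fin K → P.Ω → V
  /-- `A n m` is the `m`-th possible answer of database `n` -/
  A : (n : Fin N) → Fin (Mn n) → P.Ω → V'
  indep : P.iIndep W
  HW : ∀ k, P.H (W k) = Lw
  ans_fn : ∀ n m, ∃ f : (Fin K → V) → V', ∀ ω, A n m ω = f (fun k => W k ω)
  HA : ∀ n m, P.H (A n m) = Lx
  /-- the decoding supersets: each decoding set consists of one answer index per database -/
  Q : Fin K → Finset ((n : Fin N) → Fin (Mn n))
  Q_nonempty : ∀ k, (Q k).Nonempty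
  decodes : ∀ k, ∀ q ∈ Q k, P.condH (W k) (P.tuple fun n => A n (q n)) = 0

attribute [instance] IRScheme.fV IRScheme.dV IRScheme.fV' IRScheme.dV'

/-- A repudiative (RIR_max) scheme: every possible answer of every database appears in some
decoding set of every message. -/
def IRScheme.IsRIR {K N : ℕ} {Mn : Fin N → ℕ} {Lw Lx : ℝ} (C : IRScheme K N Mn Lw Lx) : Prop :=
  ∀ (n : Fin N) (m : Fin (Mn n)) (k : Fin K), ∃ q ∈ C.Q k, q n = m

/-- A perfectly private (PIR_max) scheme: for each message there is a distribution on its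
decoding sets such that the marginal distribution of the query to each database does not
depend on the message. -/
def IRScheme.IsPIR {K N : ℕ} {Mn : Fin N → ℕ} {Lw Lx : ℝ} (C : IRScheme K N Mn Lw Lx) : Prop :=
  ∃ μ : Fin K → ((n : Fin N) → Fin (Mn n)) → ℝ,
    (∀ k q, 0 ≤ μ k q) ∧ (∀ k, ∑ q ∈ C.Q k, μ k q = 1) ∧
    (∀ (k k' : Fin K) (n : Fin N) (m : Fin (Mn n)),
      ∑ q ∈ (C.Q k).filter (fun q => q n = m), μ k q =
        ∑ q ∈ (C.Q k').filter (fun q => q n = m), μ k' q)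

/-- `C_K(N) = (1 + 1/N + ⋯ + 1/N^{K-1})⁻¹`, the capacity of PIR. -/
def CK (N K : ℕ) : ℝ := (∑ j ∈ Finset.range K, (1 / (N : ℝ)) ^ j)⁻¹

/-!
**Lower bound.** Write `h_A(T) = H(X_T | W_A)` and `c_A = L_w / C*(N, K - |A|)`, so that
`N c_A = L_w + c_{A ∪ k}`. If `S` decodes `W_k` and `k ∉ A`, then
`L_w + h_{A ∪ k}(S) = h_A(S) ≤ ∑_{i ∈ S} h_A(i)`. In a universal code of rate `C*(N, K)` this gives
`h_A(i) ≤ c_A` by adding source symbols to `A` one at a time, and then `h_A(i) = c_A` by removing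
them again. All inequalities are then tight: given `W_A` the coded symbols in `S` are independent,
and given `W_{A ∪ k}` each of them determines the others. Hence a class of coded symbols that carry
the same information given `W_{A ∪ k}` contains `N` disjoint classes given `W_A`, and has at least
`N ^ (|A| + 1)` elements.

**Construction.** Let `W_k` be a bit string indexed by the nonzero residues modulo `N`, with
`W_k(0) = 0`. The `N ^ K` symbols `∑ k, W_k(d_k)` form a smooth code, decoded along coordinate
lines, in which only the symbol at `d = 0` has the wrong entropy, namely `0`. Using `N ^ K` copies
of this code, shifted so that each position plays the role of `0` exactly once, makes all
entropies equal.
-/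

namespace FinProbSpace

variable {P : FinProbSpace} {α β γ δ : Type}

theorem prob_nonneg [DecidableEq α] (X : P.Ω → α) (a : α) : 0 ≤ P.prob X a :=
  Finset.sum_nonneg fun ω _ => by split_ifs <;> simp [P.nonneg]

theorem le_prob_self [DecidableEq α] (X : P.Ω → α) (ω : P.Ω) : P.p ω ≤ P.prob X (X ω) := by
  have h := Finset.single_le_sum (f := fun ω' => if X ω' = X ω then P.p ω' else 0)
    (fun ω' _ => by split_ifs <;> simp [P.nonneg]) (Finset.mem_univ ω)
  simpa [prob] using h

theorem prob_le_of_factorsThrough [DecidableEq α] [DecidableEq β] {X : P.Ω → α} {Y : P.Ω → β}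
    (h : X.FactorsThrough Y) (ω : P.Ω) : P.prob Y (Y ω) ≤ P.prob X (X ω) := by
  refine Finset.sum_le_sum fun ω' _ => ?_
  by_cases hY : Y ω' = Y ω
  · simp [hY, h hY]
  · rw [if_neg hY]
    split_ifs <;> simp [P.nonneg]

theorem sum_prob_mul [Fintype α] [DecidableEq α] (X : P.Ω → α) (g : α → ℝ) :
    ∑ a, P.prob X a * g a = ∑ ω, P.p ω * g (X ω) := by
  simp only [prob, Finset.sum_mul]
  rw [Finset.sum_comm]
  simp [ite_mul]

theorem sum_prob [Fintype α] [DecidableEq α] (X : P.Ω → α) : ∑ a, P.prob X a = 1 := by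
  simpa [P.sum_one] using sum_prob_mul X fun _ => 1

theorem sum_prob_prodMk [Fintype α] [DecidableEq α] [DecidableEq β]
    (X : P.Ω → α) (Y : P.Ω → β) (b : β) :
    ∑ a, P.prob (fun ω => (X ω, Y ω)) (a, b) = P.prob Y b := by
  simp only [prob, Prod.mk.injEq, ite_and]
  rw [Finset.sum_comm]
  simp

theorem sum_prob_mul_prob_div_prob [Fintype α] [DecidableEq α] [Fintype β] [DecidableEq β]
    [Fintype γ] [DecidableEq γ] (X : P.Ω → α) (Y : P.Ω → β) (Z : P.Ω → γ) :
    ∑ a : α × β × γ, P.prob (fun ω => (X ω, Z ω)) (a.1, a.2.2) *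
      P.prob (fun ω => (Y ω, Z ω)) a.2 / P.prob Z a.2.2 = 1 := by
  simp only [Fintype.sum_prod_type]
  calc _ = ∑ x, ∑ z, ∑ y, P.prob (fun ω => (X ω, Z ω)) (x, z) *
        P.prob (fun ω => (Y ω, Z ω)) (y, z) / P.prob Z z :=
        Finset.sum_congr rfl fun x _ => Finset.sum_comm
    _ = ∑ z, P.prob Z z * P.prob Z z / P.prob Z z := by
        rw [Finset.sum_comm]
        simp_rw [← Finset.sum_div, ← Finset.mul_sum, ← Finset.sum_mul, sum_prob_prodMk]
    _ = 1 := by simp only [mul_self_div_self, sum_prob]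

theorem sum_mul_logb_nonpos {g : P.Ω → ℝ} (hpos : ∀ ω, 0 < P.p ω → 0 < g ω)
    (hsum : ∑ ω, P.p ω * g ω ≤ 1) : ∑ ω, P.p ω * Real.logb 2 (g ω) ≤ 0 := by
  have hlog : ∀ ω, P.p ω * Real.log (g ω) ≤ P.p ω * g ω - P.p ω := fun ω => by
    rcases (P.nonneg ω).eq_or_lt with h0 | h0
    · simp [← h0]
    · rw [← mul_sub_one]
      exact mul_le_mul_of_nonneg_left (Real.log_le_sub_one_of_pos (hpos ω h0)) h0.le
  have htotal := Finset.sum_le_sum fun ω (_ : ω ∈ Finset.univ) => hlog ω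
  rw [Finset.sum_sub_distrib, P.sum_one] at htotal
  simp only [Real.logb, ← mul_div_assoc, ← Finset.sum_div]
  exact div_nonpos_of_nonpos_of_nonneg (by linarith) (Real.log_pos one_lt_two).le

section Entropy

variable [Fintype α] [DecidableEq α] [Fintype β] [DecidableEq β] [Fintype γ] [DecidableEq γ]
  [Fintype δ] [DecidableEq δ]

theorem H_eq_neg_sum (X : P.Ω → α) :
    P.H X = -∑ ω, P.p ω * Real.logb 2 (P.prob X (X ω)) := by
  rw [H, Finset.sum_neg_distrib, sum_prob_mul X fun a => Real.logb 2 (P.prob X a)]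

theorem H_le_of_factorsThrough {X : P.Ω → α} {Y : P.Ω → β} (h : X.FactorsThrough Y) :
    P.H X ≤ P.H Y := by
  rw [H_eq_neg_sum, H_eq_neg_sum, neg_le_neg_iff]
  refine Finset.sum_le_sum fun ω _ => ?_
  rcases (P.nonneg ω).eq_or_lt with h0 | h0
  · simp [← h0]
  · exact mul_le_mul_of_nonneg_left (Real.logb_le_logb_of_le one_lt_two
      (h0.trans_le (le_prob_self Y ω)) (prob_le_of_factorsThrough h ω)) h0.le

theorem H_congr {X : P.Ω → α} {Y : P.Ω → β} (h : X.FactorsThrough Y)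
    (h' : Y.FactorsThrough X) : P.H X = P.H Y :=
  (H_le_of_factorsThrough h).antisymm (H_le_of_factorsThrough h')

theorem H_of_subsingleton [Subsingleton α] (X : P.Ω → α) : P.H X = 0 := by
  have h : ∀ ω, P.prob X (X ω) = 1 := fun ω => by
    simp [prob, Subsingleton.elim _ (X ω), P.sum_one]
  simp [H_eq_neg_sum, h]

theorem H_of_prob_eq {X : P.Ω → α} {c : ℝ} (h : ∀ ω, P.prob X (X ω) = c⁻¹) :
    P.H X = Real.logb 2 c := by
  simp [H_eq_neg_sum, h, ← Finset.sum_mul, P.sum_one]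

theorem H_prodMk_prodMk_add_le (X : P.Ω → α) (Y : P.Ω → β) (Z : P.Ω → γ) :
    P.H (fun ω => (X ω, Y ω, Z ω)) + P.H Z ≤
      P.H (fun ω => (X ω, Z ω)) + P.H (fun ω => (Y ω, Z ω)) := by
  set XYZ := fun ω => (X ω, Y ω, Z ω)
  set XZ := fun ω => (X ω, Z ω)
  set YZ := fun ω => (Y ω, Z ω)
  let ratio : α × β × γ → ℝ := fun a =>
    P.prob XZ (a.1, a.2.2) * P.prob YZ a.2 / (P.prob XYZ a * P.prob Z a.2.2)
  have hsum : ∑ ω, P.p ω * ratio (XYZ ω) ≤ 1 := by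
    rw [← sum_prob_mul, ← sum_prob_mul_prob_div_prob X Y Z]
    refine Finset.sum_le_sum fun a _ => ?_
    rcases (prob_nonneg XYZ a).eq_or_lt with h0 | h0
    · rw [← h0, zero_mul]
      exact div_nonneg (mul_nonneg (prob_nonneg _ _) (prob_nonneg _ _)) (prob_nonneg _ _)
    · rw [← mul_div_assoc, mul_div_mul_left _ _ h0.ne']
  have hprob : ∀ ω, 0 < P.p ω → (0 < P.prob XZ (XZ ω) ∧ 0 < P.prob YZ (YZ ω)) ∧
      0 < P.prob XYZ (XYZ ω) ∧ 0 < P.prob Z (Z ω) := fun ω h0 =>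
    ⟨⟨h0.trans_le (le_prob_self XZ ω), h0.trans_le (le_prob_self YZ ω)⟩,
      h0.trans_le (le_prob_self XYZ ω), h0.trans_le (le_prob_self Z ω)⟩
  have hlogb : ∀ ω, P.p ω * Real.logb 2 (ratio (XYZ ω)) =
      P.p ω * Real.logb 2 (P.prob XZ (XZ ω)) + P.p ω * Real.logb 2 (P.prob YZ (YZ ω)) -
      (P.p ω * Real.logb 2 (P.prob XYZ (XYZ ω)) + P.p ω * Real.logb 2 (P.prob Z (Z ω))) := by
    intro ω
    rcases (P.nonneg ω).eq_or_lt with h0 | h0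
    · simp [← h0]
    · obtain ⟨⟨hXZ, hYZ⟩, hXYZ, hZ⟩ := hprob ω h0
      rw [← mul_add, ← mul_add, ← mul_sub, ← Real.logb_mul hXZ.ne' hYZ.ne',
        ← Real.logb_mul hXYZ.ne' hZ.ne', ← Real.logb_div (by positivity) (by positivity)]
  have hgibbs := sum_mul_logb_nonpos (g := fun ω => ratio (XYZ ω)) (fun ω h0 => by
    obtain ⟨⟨hXZ, hYZ⟩, hXYZ, hZ⟩ := hprob ω h0
    exact div_pos (mul_pos hXZ hYZ) (mul_pos hXYZ hZ)) hsum
  simp only [hlogb, Finset.sum_sub_distrib, Finset.sum_add_distrib] at hgibbs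
  simp only [H_eq_neg_sum]
  linarith

theorem condH_nonneg (X : P.Ω → α) (Y : P.Ω → β) : 0 ≤ P.condH X Y :=
  sub_nonneg.2 (H_le_of_factorsThrough fun _ _ h => congrArg Prod.snd h)

theorem condH_eq_zero_of_factorsThrough {X : P.Ω → α} {Y : P.Ω → β} (h : X.FactorsThrough Y) :
    P.condH X Y = 0 :=
  sub_eq_zero.2 (H_congr (fun _ _ e => Prod.ext (h e) e) fun _ _ e => congrArg Prod.snd e)

theorem condH_mono {X : P.Ω → α} {Y : P.Ω → β} (h : X.FactorsThrough Y) (Z : P.Ω → γ) :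
    P.condH X Z ≤ P.condH Y Z := by
  refine sub_le_sub_right (H_le_of_factorsThrough fun ω ω' e => ?_) _
  obtain ⟨hY, hZ⟩ := Prod.mk.inj e
  exact Prod.ext (h hY) hZ

theorem condH_anti (X : P.Ω → α) {Y : P.Ω → β} {Z : P.Ω → γ} (h : Z.FactorsThrough Y) :
    P.condH X Y ≤ P.condH X Z := by
  have hsub := H_prodMk_prodMk_add_le X Y Z
  have hXY : P.H (fun ω => (X ω, Y ω)) ≤ P.H (fun ω => (X ω, Y ω, Z ω)) :=
    H_le_of_factorsThrough fun _ _ e => by simp_all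
  have hYZ : P.H (fun ω => (Y ω, Z ω)) ≤ P.H Y :=
    H_le_of_factorsThrough fun _ _ e => Prod.ext e (h e)
  simp only [condH]
  linarith

theorem condH_of_subsingleton_right [Subsingleton β] (X : P.Ω → α) (Y : P.Ω → β) :
    P.condH X Y = P.H X := by
  rw [condH, H_of_subsingleton Y, sub_zero]
  exact H_congr (fun _ _ h => Prod.ext h (Subsingleton.elim _ _)) fun _ _ h => congrArg Prod.fst h

theorem condH_le_H (X : P.Ω → α) (Y : P.Ω → β) : P.condH X Y ≤ P.H X :=
  (condH_anti X (Z := fun _ => ()) fun _ _ _ => rfl).trans_eq (condH_of_subsingleton_right X _)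

theorem condH_prodMk (X : P.Ω → α) (Y : P.Ω → β) (Z : P.Ω → γ) :
    P.condH (fun ω => (X ω, Y ω)) Z = P.condH Y Z + P.condH X (fun ω => (Y ω, Z ω)) := by
  have hassoc : P.H (fun ω => ((X ω, Y ω), Z ω)) = P.H (fun ω => (X ω, Y ω, Z ω)) :=
    H_congr (fun _ _ h => by simp_all) (fun _ _ h => by simp_all)
  simp only [condH, hassoc]
  ring

theorem condH_eq_add_of_condH_eq_zero {X : P.Ω → α} {Y : P.Ω → β} (h : P.condH X Y = 0)
    (Z : P.Ω → γ) : P.condH Y Z = P.condH X Z + P.condH Y (fun ω => (X ω, Z ω)) := by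
  have hX : P.condH X (fun ω => (Y ω, Z ω)) = 0 :=
    ((condH_anti X (Z := Y) fun _ _ e => (Prod.mk.inj e).1).trans_eq h).antisymm
      (condH_nonneg _ _)
  have hswap : P.condH (fun ω => (X ω, Y ω)) Z = P.condH (fun ω => (Y ω, X ω)) Z :=
    (condH_mono (fun _ _ e => by simp_all) Z).antisymm (condH_mono (fun _ _ e => by simp_all) Z)
  rw [← condH_prodMk, ← hswap, condH_prodMk, hX, add_zero]

theorem condH_prodMk_eq_zero_trans {X : P.Ω → α} {Y : P.Ω → β} {U : P.Ω → γ} {Z : P.Ω → δ}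
    (hX : P.condH X (fun ω => (Y ω, Z ω)) = 0) (hY : P.condH Y (fun ω => (U ω, Z ω)) = 0) :
    P.condH X (fun ω => (U ω, Z ω)) = 0 := by
  refine le_antisymm ?_ (condH_nonneg _ _)
  calc P.condH X (fun ω => (U ω, Z ω))
      ≤ P.condH (fun ω => (X ω, Y ω)) (fun ω => (U ω, Z ω)) :=
        condH_mono (fun _ _ e => (Prod.mk.inj e).1) _
    _ = P.condH X (fun ω => (Y ω, U ω, Z ω)) := by rw [condH_prodMk, hY, zero_add]
    _ ≤ P.condH X (fun ω => (Y ω, Z ω)) := condH_anti X fun _ _ e => by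
        simp only [Prod.mk.injEq] at e ⊢
        exact ⟨e.1, e.2.2⟩
    _ = 0 := hX

theorem sameInfo_refl (X : P.Ω → α) (Z : P.Ω → β) : P.sameInfo X X Z := by
  have h : P.condH X (fun ω => (X ω, Z ω)) = 0 :=
    condH_eq_zero_of_factorsThrough fun _ _ e => (Prod.mk.inj e).1
  exact ⟨h, h⟩

theorem sameInfo.trans {X : P.Ω → α} {Y : P.Ω → β} {U : P.Ω → γ} {Z : P.Ω → δ}
    (h : P.sameInfo X Y Z) (h' : P.sameInfo Y U Z) : P.sameInfo X U Z :=
  ⟨condH_prodMk_eq_zero_trans h.1 h'.1, condH_prodMk_eq_zero_trans h'.2 h.2⟩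

theorem sameInfo.of_factorsThrough {X : P.Ω → α} {Y : P.Ω → β} {Z : P.Ω → γ} {Z' : P.Ω → δ}
    (h : P.sameInfo X Y Z) (hZ : Z.FactorsThrough Z') : P.sameInfo X Y Z' := by
  refine ⟨((condH_anti X fun ω ω' e => ?_).trans_eq h.1).antisymm (condH_nonneg _ _),
    ((condH_anti Y fun ω ω' e => ?_).trans_eq h.2).antisymm (condH_nonneg _ _)⟩ <;>
  · obtain ⟨hXY, hZ'⟩ := Prod.mk.inj e
    exact Prod.ext hXY (hZ hZ')

end Entropy

section Subtuple

variable {ι V : Type}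

/-- The subfamily `(X_i)_{i ∈ T}` of a family of random variables, as a single random variable.
It unfolds to the form in which `LDC.decodes` refers to the coded symbols of a decoding set. -/
def subtuple (X : ι → P.Ω → V) (T : Finset ι) : P.Ω → {x // x ∈ T} → V :=
  P.tuple fun i : {x // x ∈ T} => X i.1

theorem subtuple_eq_iff {X : ι → P.Ω → V} {T : Finset ι} {ω ω' : P.Ω} :
    subtuple X T ω = subtuple X T ω' ↔ ∀ i ∈ T, X i ω = X i ω' := by
  simp [subtuple, tuple, funext_iff]

theorem factorsThrough_subtuple (X : ι → P.Ω → V) {T : Finset ι} {i : ι} (hi : i ∈ T) :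
    (X i).FactorsThrough (subtuple X T) :=
  fun _ _ h => subtuple_eq_iff.1 h i hi

theorem subtuple_factorsThrough_subtuple (X : ι → P.Ω → V) {T U : Finset ι} (h : T ⊆ U) :
    (subtuple X T).FactorsThrough (subtuple X U) :=
  fun _ _ e => subtuple_eq_iff.2 fun i hi => subtuple_eq_iff.1 e i (h hi)

theorem subtuple_insert_eq_iff [DecidableEq ι] {X : ι → P.Ω → V} {i : ι} {T : Finset ι}
    {ω ω' : P.Ω} : subtuple X (insert i T) ω = subtuple X (insert i T) ω' ↔
      (X i ω, subtuple X T ω) = (X i ω', subtuple X T ω') := by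
  simp [subtuple_eq_iff]

variable [Fintype V] [DecidableEq V] [Fintype β] [DecidableEq β] [DecidableEq ι]

theorem condH_subtuple_insert (X : ι → P.Ω → V) (Z : P.Ω → β) (i : ι) (T : Finset ι) :
    P.condH (subtuple X (insert i T)) Z =
      P.condH (subtuple X T) Z + P.condH (X i) (fun ω => (subtuple X T ω, Z ω)) := by
  rw [← condH_prodMk]
  exact (condH_mono (fun _ _ => subtuple_insert_eq_iff.2) Z).antisymm
    (condH_mono (fun _ _ => subtuple_insert_eq_iff.1) Z)

theorem condH_subtuple_le_sum (X : ι → P.Ω → V) (Z : P.Ω → β) (T : Finset ι) :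
    P.condH (subtuple X T) Z ≤ ∑ i ∈ T, P.condH (X i) Z := by
  induction T using Finset.induction_on with
  | empty => simp [condH_eq_zero_of_factorsThrough fun _ _ _ => Subsingleton.elim _ _]
  | insert i T hi ih =>
    have hX := condH_anti (X i) (Y := fun ω => (subtuple X T ω, Z ω)) (Z := Z)
      fun _ _ e => congrArg Prod.snd e
    rw [condH_subtuple_insert, Finset.sum_insert hi]
    linarith

variable [Fintype ι]

theorem iIndep.H_tuple {X : ι → P.Ω → V} (h : P.iIndep X) :
    P.H (P.tuple X) = ∑ i, P.H (X i) := by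
  simp only [H_eq_neg_sum, Finset.sum_neg_distrib]
  rw [Finset.sum_comm]
  congr 1
  refine Finset.sum_congr rfl fun ω _ => ?_
  rw [← Finset.mul_sum]
  rcases (P.nonneg ω).eq_or_lt with h0 | h0
  · simp [← h0]
  · rw [h]
    exact congrArg _ (Real.logb_prod _ _ fun i _ => (h0.trans_le (le_prob_self (X i) ω)).ne')

theorem iIndep.condH_subtuple {X : ι → P.Ω → V} (h : P.iIndep X) {i : ι} {A : Finset ι}
    (hi : i ∉ A) : P.condH (X i) (subtuple X A) = P.H (X i) := by
  refine (condH_le_H _ _).antisymm ?_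
  set B : Finset ι := Finset.univ.erase i
  set Z : P.Ω → Unit := fun _ => ()
  have htotal : ∑ j, P.H (X j) =
      P.condH (subtuple X B) Z + P.condH (X i) (fun ω => (subtuple X B ω, Z ω)) := by
    rw [← condH_subtuple_insert, condH_of_subsingleton_right, ← h.H_tuple]
    refine H_congr (fun ω ω' e => funext fun j => ?_) fun ω ω' e =>
      subtuple_eq_iff.2 fun j _ => congrFun e j
    exact subtuple_eq_iff.1 e j (by simp [B])
  have hB : P.condH (subtuple X B) Z ≤ ∑ j ∈ B, P.H (X j) := by
    simpa only [condH_of_subsingleton_right] using condH_subtuple_le_sum X Z B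
  have hA : P.condH (X i) (fun ω => (subtuple X B ω, Z ω)) ≤ P.condH (X i) (subtuple X A) :=
    condH_anti _ fun _ _ e => subtuple_factorsThrough_subtuple X
      (fun j hj => Finset.mem_erase.2 ⟨ne_of_mem_of_not_mem hj hi, Finset.mem_univ j⟩)
      (congrArg Prod.fst e)
  have hsplit := Finset.add_sum_erase Finset.univ (fun j => P.H (X j)) (Finset.mem_univ i)
  linarith

end Subtuple

end FinProbSpace

theorem Cstar_zero_right (N : ℕ) : Cstar N 0 = 0 := by
  simp [Cstar]

theorem Cstar_pos {N K : ℕ} (hN : N ≠ 0) (hK : K ≠ 0) : 0 < Cstar N K := by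
  have hN' : (0 : ℝ) < N := by positivity
  exact div_pos hN' (Finset.sum_pos (fun j _ => by positivity) (by simpa using hK))

theorem mul_div_Cstar_succ {N : ℕ} (hN : N ≠ 0) (K : ℕ) (L : ℝ) :
    N * (L / Cstar N (K + 1)) = L + L / Cstar N K := by
  have hN' : (N : ℝ) ≠ 0 := by exact_mod_cast hN
  rw [Cstar, Cstar, Finset.sum_range_succ']
  simp only [pow_succ, ← Finset.sum_mul]
  field_simp
  simp [add_comm]

theorem Cstar_eq_sub_one_mul_pow_div {N : ℕ} (hN : 2 ≤ N) (K : ℕ) :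
    Cstar N K = ((N - 1 : ℝ) * N ^ K) / (N ^ K - 1) := by
  have hN0 : (N : ℝ) ≠ 0 := by positivity
  have hN1 : (N : ℝ) ≠ 1 := by exact_mod_cast (show N ≠ 1 by lia)
  have hsub : (N - 1 : ℝ) ≠ 0 := sub_ne_zero.2 hN1
  simp only [Cstar, one_div]
  rw [geom_sum_inv hN1 hN0, inv_pow]
  rcases eq_or_ne ((N : ℝ) ^ K - 1) 0 with h0 | h0
  · simp [sub_eq_zero.1 h0]
  · field_simp

/-- The conditional entropy of a coded symbol given the source symbols in `A`, in a universal code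
with locality `N` and source symbols of entropy `L` that achieves capacity: what remains of such a
code given `W_A` has `|Aᶜ|` source symbols and still achieves capacity. The case `A = univ` is
`L / 0 = 0`. -/
def capacityResidual {K : ℕ} (N : ℕ) (L : ℝ) (A : Finset (Fin K)) : ℝ :=
  L / Cstar N Aᶜ.card

theorem capacityResidual_empty (K N : ℕ) (L : ℝ) :
    capacityResidual N L (∅ : Finset (Fin K)) = L / Cstar N K := by
  simp [capacityResidual]

theorem capacityResidual_univ (K N : ℕ) (L : ℝ) :
    capacityResidual N L (Finset.univ : Finset (Fin K)) = 0 := by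
  simp [capacityResidual, Cstar_zero_right]

theorem mul_capacityResidual {K N : ℕ} (hN : N ≠ 0) (L : ℝ) {A : Finset (Fin K)} {k : Fin K}
    (hk : k ∉ A) :
    N * capacityResidual N L A = L + capacityResidual N L (insert k A) := by
  rw [capacityResidual, capacityResidual, Finset.compl_insert, ← mul_div_Cstar_succ hN,
    Finset.card_erase_add_one (Finset.mem_compl.2 hk)]

theorem capacityResidual_pos {K N : ℕ} (hN : N ≠ 0) {L : ℝ} (hL : 0 < L) {A : Finset (Fin K)}
    {k : Fin K} (hk : k ∉ A) : 0 < capacityResidual N L A :=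
  div_pos hL (Cstar_pos hN (Finset.card_ne_zero_of_mem (Finset.mem_compl.2 hk)))

namespace LDC

open FinProbSpace

variable {K N M : ℕ} {Lw Lx : ℝ} (C : LDC K N M Lw Lx)

/-- The conditional entropy `H(X_m | W_A)` of a coded symbol given the source symbols in `A`. -/
def residual (A : Finset (Fin K)) (m : Fin M) : ℝ :=
  C.P.condH (C.X m) (subtuple C.W A)

/-- The conditional entropy `H(X_T | W_A)` of the coded symbols in `T` given the source symbols
in `A`. -/
def jointResidual (A : Finset (Fin K)) (T : Finset (Fin M)) : ℝ :=
  C.P.condH (subtuple C.X T) (subtuple C.W A)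

theorem residual_empty (m : Fin M) : C.residual ∅ m = Lx :=
  (condH_of_subsingleton_right _ _).trans (C.HX m)

theorem residual_nonneg (A : Finset (Fin K)) (m : Fin M) : 0 ≤ C.residual A m :=
  condH_nonneg _ _

theorem residual_le_jointResidual (A : Finset (Fin K)) {T : Finset (Fin M)} {m : Fin M}
    (hm : m ∈ T) : C.residual A m ≤ C.jointResidual A T :=
  condH_mono (factorsThrough_subtuple C.X hm) _

theorem jointResidual_le_sum (A : Finset (Fin K)) (T : Finset (Fin M)) :
    C.jointResidual A T ≤ ∑ i ∈ T, C.residual A i :=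
  condH_subtuple_le_sum _ _ _

theorem jointResidual_of_mem_decSets {A : Finset (Fin K)} {k : Fin K} (hk : k ∉ A)
    {S : Finset (Fin M)} (hS : S ∈ C.decSets k) :
    C.jointResidual A S = Lw + C.jointResidual (insert k A) S := by
  have hW : C.P.condH (C.W k) (subtuple C.W A) = Lw :=
    (C.indep.condH_subtuple hk).trans (C.HW k)
  have hinsert : C.P.condH (subtuple C.X S) (fun ω => (C.W k ω, subtuple C.W A ω)) =
      C.jointResidual (insert k A) S :=
    (condH_anti _ fun _ _ => subtuple_insert_eq_iff.2).antisymm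
      (condH_anti _ fun _ _ => subtuple_insert_eq_iff.1)
  have hdec : C.P.condH (C.W k) (subtuple C.X S) = 0 := C.decodes k S hS
  rw [jointResidual, condH_eq_add_of_condH_eq_zero hdec, hW, hinsert]

theorem add_residual_insert_le_sum {A : Finset (Fin K)} {k : Fin K} (hk : k ∉ A)
    {S : Finset (Fin M)} (hS : S ∈ C.decSets k) {i : Fin M} (hi : i ∈ S) :
    Lw + C.residual (insert k A) i ≤ ∑ j ∈ S, C.residual A j := by
  have hsum := C.jointResidual_le_sum A S
  have hdec := C.jointResidual_of_mem_decSets hk hS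
  have hle := C.residual_le_jointResidual (insert k A) hi
  linarith

variable [NeZero N] {C}

theorem IsUniversal.residual_le (hC : C.IsUniversal) (hLx : Lx ≤ Lw / Cstar N K)
    (A : Finset (Fin K)) (m : Fin M) : C.residual A m ≤ capacityResidual N Lw A := by
  induction A using Finset.induction_on generalizing m with
  | empty => rwa [residual_empty, capacityResidual_empty]
  | insert k A hk ih =>
    obtain ⟨S, hS, hm⟩ := hC m k
    have hbound : ∑ j ∈ S, C.residual A j ≤ N * capacityResidual N Lw A := by
      simpa [C.decSets_card k S hS] using Finset.sum_le_sum fun j (_ : j ∈ S) => ih j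
    rw [mul_capacityResidual (NeZero.ne N) Lw hk] at hbound
    linarith [C.add_residual_insert_le_sum hk hS hm]

theorem IsUniversal.residual_eq_of_insert (hC : C.IsUniversal) {A : Finset (Fin K)} {k : Fin K}
    (hk : k ∉ A) (hle : ∀ m, C.residual A m ≤ capacityResidual N Lw A)
    (hinsert : ∀ m, C.residual (insert k A) m = capacityResidual N Lw (insert k A)) (m : Fin M) :
    C.residual A m = capacityResidual N Lw A := by
  obtain ⟨S, hS, hm⟩ := hC m k
  have hsum := C.add_residual_insert_le_sum hk hS hm
  rw [hinsert, ← mul_capacityResidual (NeZero.ne N) Lw hk] at hsum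
  refine (Finset.sum_eq_sum_iff_of_le fun j _ => hle j).1 ?_ m hm
  refine (Finset.sum_le_sum fun j _ => hle j).antisymm ?_
  simpa [C.decSets_card k S hS] using hsum

theorem IsUniversal.residual_eq (hC : C.IsUniversal) (hLx : Lx ≤ Lw / Cstar N K)
    (A : Finset (Fin K)) : ∀ m, C.residual A m = capacityResidual N Lw A := by
  suffices h : ∀ B : Finset (Fin K), ∀ m, C.residual Bᶜ m = capacityResidual N Lw Bᶜ by
    simpa using h Aᶜ
  intro B
  induction B using Finset.induction_on with
  | empty =>
    intro m
    refine (hC.residual_le hLx _ m).antisymm ?_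
    rw [Finset.compl_empty, capacityResidual_univ]
    exact C.residual_nonneg _ m
  | insert k B hk ih =>
    have hB : insert k (insert k B)ᶜ = Bᶜ := by
      rw [Finset.compl_insert, Finset.insert_erase (Finset.mem_compl.2 hk)]
    exact hC.residual_eq_of_insert (k := k) (by simp) (hC.residual_le hLx _) (by rwa [hB])

theorem sameInfo_of_mem_decSets
    (hres : ∀ A m, C.residual A m = capacityResidual N Lw A) {A : Finset (Fin K)} {k : Fin K}
    (hk : k ∉ A) {S : Finset (Fin M)} (hS : S ∈ C.decSets k) {i j : Fin M} (hi : i ∈ S)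
    (hj : j ∈ S) : C.P.sameInfo (C.X i) (C.X j) (subtuple C.W (insert k A)) := by
  have hS_le : C.jointResidual (insert k A) S ≤ capacityResidual N Lw (insert k A) := by
    have hsum := C.jointResidual_le_sum A S
    simp only [hres, Finset.sum_const, C.decSets_card k S hS, nsmul_eq_mul,
      mul_capacityResidual (NeZero.ne N) Lw hk, C.jointResidual_of_mem_decSets hk hS] at hsum
    linarith
  have hzero : ∀ a ∈ S, ∀ b ∈ S,
      C.P.condH (C.X a) (fun ω => (C.X b ω, subtuple C.W (insert k A) ω)) = 0 := by
    intro a ha b hb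
    refine le_antisymm ?_ (condH_nonneg _ _)
    have hpair : C.P.condH (fun ω => (C.X a ω, C.X b ω)) (subtuple C.W (insert k A)) ≤
        C.jointResidual (insert k A) S :=
      condH_mono (fun _ _ e => Prod.ext (factorsThrough_subtuple C.X ha e)
        (factorsThrough_subtuple C.X hb e)) _
    rw [condH_prodMk, show C.P.condH (C.X b) (subtuple C.W (insert k A)) = _ from hres _ b] at hpair
    linarith
  exact ⟨hzero i hi j hj, hzero j hj i hi⟩

theorem not_sameInfo_of_mem_decSets (hLw : 0 < Lw)
    (hres : ∀ A m, C.residual A m = capacityResidual N Lw A) {A : Finset (Fin K)} {k : Fin K}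
    (hk : k ∉ A) {S : Finset (Fin M)} (hS : S ∈ C.decSets k) {i j : Fin M} (hi : i ∈ S)
    (hj : j ∈ S) (hij : i ≠ j) : ¬ C.P.sameInfo (C.X i) (C.X j) (subtuple C.W A) := by
  intro h
  have hj' : j ∈ S.erase i := Finset.mem_erase.2 ⟨hij.symm, hj⟩
  have hi_le : C.P.condH (C.X i) (fun ω => (subtuple C.X (S.erase i) ω, subtuple C.W A ω)) ≤ 0 := by
    refine (condH_anti _ fun ω ω' e => ?_).trans_eq h.1
    obtain ⟨hX, hW⟩ := Prod.mk.inj e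
    exact Prod.ext (factorsThrough_subtuple C.X hj' hX) hW
  have hle : C.jointResidual A S ≤ ∑ l ∈ S.erase i, C.residual A l := by
    have hchain := condH_subtuple_insert C.X (subtuple C.W A) i (S.erase i)
    rw [Finset.insert_erase hi] at hchain
    have hsum := C.jointResidual_le_sum A (S.erase i)
    simp only [jointResidual] at hsum ⊢
    linarith
  have hge : ∑ l ∈ S, C.residual A l ≤ C.jointResidual A S := by
    rw [C.jointResidual_of_mem_decSets hk hS]
    simp only [hres, Finset.sum_const, C.decSets_card k S hS, nsmul_eq_mul,
      mul_capacityResidual (NeZero.ne N) Lw hk]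
    have hi_le := C.residual_le_jointResidual (insert k A) hi
    rw [hres] at hi_le
    linarith
  have hpos : 0 < C.residual A i := by
    rw [hres]
    exact capacityResidual_pos (NeZero.ne N) hLw hk
  linarith [Finset.add_sum_erase S (C.residual A) hi]

open Classical in
theorem pow_card_le_card_filter_sameInfo (hC : C.IsUniversal) (hLw : 0 < Lw)
    (hres : ∀ A m, C.residual A m = capacityResidual N Lw A) (A : Finset (Fin K)) (i : Fin M) :
    N ^ A.card ≤
      (Finset.univ.filter fun j => C.P.sameInfo (C.X i) (C.X j) (subtuple C.W A)).card := by
  induction A using Finset.induction_on generalizing i with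
  | empty =>
    rw [Finset.card_empty, pow_zero, Nat.one_le_iff_ne_zero]
    exact Finset.card_ne_zero_of_mem (Finset.mem_filter.2 ⟨Finset.mem_univ i, sameInfo_refl _ _⟩)
  | insert k A hk ih =>
    obtain ⟨S, hS, hi⟩ := hC i k
    let cls : Fin M → Finset (Fin M) := fun s =>
      Finset.univ.filter fun j => C.P.sameInfo (C.X s) (C.X j) (subtuple C.W A)
    have mem_cls : ∀ {s j}, j ∈ cls s ↔ C.P.sameInfo (C.X s) (C.X j) (subtuple C.W A) := by
      simp [cls]
    have hdisj : ∀ s ∈ S, ∀ t ∈ S, s ≠ t → Disjoint (cls s) (cls t) := fun s hs t ht hst =>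
      Finset.disjoint_left.2 fun j hjs hjt => not_sameInfo_of_mem_decSets hLw hres hk hS hs ht hst
        ((mem_cls.1 hjs).trans (mem_cls.1 hjt).symm)
    calc N ^ (insert k A).card = ∑ _s ∈ S, N ^ A.card := by
          simp [C.decSets_card k S hS, Finset.card_insert_of_notMem hk, pow_succ']
      _ ≤ ∑ s ∈ S, (cls s).card := Finset.sum_le_sum fun s _ => ih s
      _ = (S.biUnion cls).card := (Finset.card_biUnion hdisj).symm
      _ ≤ _ := by
        refine Finset.card_le_card fun j hj => Finset.mem_filter.2 ⟨Finset.mem_univ j, ?_⟩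
        obtain ⟨s, hs, hj⟩ := Finset.mem_biUnion.1 hj
        exact (sameInfo_of_mem_decSets hres hk hS hi hs).trans ((mem_cls.1 hj).of_factorsThrough
          (subtuple_factorsThrough_subtuple C.W (Finset.subset_insert k A)))

theorem IsUniversal.pow_le_length (hC : C.IsUniversal) (hK : K ≠ 0) (hLw : 0 < Lw)
    (hLx : Lx ≤ Lw / Cstar N K) : N ^ K ≤ M := by
  classical
  obtain ⟨S, hS⟩ := C.decSets_nonempty ⟨0, Nat.pos_of_ne_zero hK⟩
  obtain ⟨i, -⟩ : S.Nonempty := by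
    rw [← Finset.card_ne_zero, C.decSets_card _ S hS]
    exact NeZero.ne N
  simpa using (pow_card_le_card_filter_sameInfo hC hLw (hC.residual_eq hLx) Finset.univ i).trans
    (Finset.card_le_univ _)

theorem IsSmooth.isUniversal (hC : C.IsSmooth) : C.IsUniversal := by
  intro m k
  obtain ⟨S, hS⟩ := C.decSets_nonempty k
  obtain ⟨i, hi⟩ : S.Nonempty := by
    rw [← Finset.card_ne_zero, C.decSets_card k S hS]
    exact NeZero.ne N
  have hpos := Finset.card_ne_zero_of_mem (s := (C.decSets k).filter fun s => i ∈ s)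
    (Finset.mem_filter.2 ⟨hS, hi⟩)
  rw [hC k i m, Finset.card_ne_zero] at hpos
  obtain ⟨T, hT⟩ := hpos
  exact ⟨T, Finset.mem_filter.1 hT⟩

end LDC

namespace FinProbSpace

/-- The uniform probability distribution on a nonempty finite type. -/
def uniform (Ω : Type) [Fintype Ω] [Nonempty Ω] : FinProbSpace where
  Ω := Ω
  p _ := (Fintype.card Ω : ℝ)⁻¹
  nonneg _ := by positivity
  sum_one := by simp

variable {G H : Type} [AddGroup G] [Fintype G] [AddGroup H] [Fintype H] [DecidableEq H]

theorem prob_uniform_of_surjective (φ : G →+ H) (hφ : Function.Surjective φ) (h : H) :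
    (uniform G).prob φ h = (Fintype.card H : ℝ)⁻¹ := by
  have hconst : ∀ x, (uniform G).prob φ x = (uniform G).prob φ h := fun x => by
    have hfiber := AddMonoidHom.card_fiber_eq_of_mem_range φ (hφ x) (hφ h)
    change ∑ ω : G, (if φ ω = x then (Fintype.card G : ℝ)⁻¹ else 0) =
      ∑ ω : G, (if φ ω = h then (Fintype.card G : ℝ)⁻¹ else 0)
    rw [← Finset.sum_filter, ← Finset.sum_filter, Finset.sum_const, Finset.sum_const, hfiber]
  have hsum := sum_prob (P := uniform G) φ
  simp only [hconst, Finset.sum_const, Finset.card_univ, nsmul_eq_mul] at hsum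
  exact eq_inv_of_mul_eq_one_right hsum

theorem H_uniform_of_surjective (φ : G →+ H) (hφ : Function.Surjective φ) :
    (uniform G).H φ = Real.logb 2 (Fintype.card H) :=
  H_of_prob_eq fun ω => prob_uniform_of_surjective φ hφ (φ ω)

variable {ι : Type} [Fintype ι] [DecidableEq ι]

theorem H_uniform_eval (i : ι) :
    (uniform (ι → H)).H (fun ω : ι → H => ω i) = Real.logb 2 (Fintype.card H) :=
  H_uniform_of_surjective (Pi.evalAddMonoidHom (fun _ : ι => H) i) (Function.surjective_eval i)

theorem iIndep_uniform_eval : (uniform (ι → H)).iIndep fun i (ω : ι → H) => ω i := by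
  intro a
  have hjoint : (uniform (ι → H)).prob (fun ω : ι → H => ω) a = (Fintype.card (ι → H) : ℝ)⁻¹ :=
    prob_uniform_of_surjective (AddMonoidHom.id (ι → H)) Function.surjective_id a
  have hmarginal : ∀ i, (uniform (ι → H)).prob (fun ω : ι → H => ω i) (a i) =
      (Fintype.card H : ℝ)⁻¹ := fun i =>
    prob_uniform_of_surjective (Pi.evalAddMonoidHom (fun _ : ι => H) i)
      (Function.surjective_eval i) (a i)
  refine hjoint.trans ?_
  simp only [hmarginal, Finset.prod_const, Finset.card_univ, Fintype.card_fun, Nat.cast_pow,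
    inv_pow]

end FinProbSpace

theorem logb_two_card_bits (ι : Type*) [Fintype ι] [DecidableEq ι] :
    Real.logb 2 (Fintype.card (ι → ZMod 2)) = Fintype.card ι := by
  simp [Real.logb_pow]

section CoordLine

variable {ι α : Type*} [DecidableEq ι] [Fintype α] [DecidableEq (ι → α)]

/-- The line through `q` in direction `k`. -/
def coordLine (k : ι) (q : ι → α) : Finset (ι → α) :=
  Finset.univ.image (Function.update q k)

theorem mem_coordLine {k : ι} {q r : ι → α} :
    r ∈ coordLine k q ↔ ∃ j, Function.update q k j = r := by
  simp [coordLine]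

theorem self_mem_coordLine (k : ι) (q : ι → α) : q ∈ coordLine k q :=
  mem_coordLine.2 ⟨q k, Function.update_eq_self k q⟩

theorem coordLine_eq_of_mem {k : ι} {q r : ι → α} (h : r ∈ coordLine k q) :
    coordLine k q = coordLine k r := by
  obtain ⟨j, rfl⟩ := mem_coordLine.1 h
  ext x
  simp [mem_coordLine]

theorem card_coordLine (k : ι) (q : ι → α) : (coordLine k q).card = Fintype.card α := by
  rw [coordLine, Finset.card_image_of_injective _ (Function.update_injective q k),
    Finset.card_univ]

end CoordLine

section PuncturedSum

variable {ι G R : Type*} [Fintype ι] [Zero G] [AddCommMonoid R]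

/-- The coded symbol `∑ k, w_k(d_k)` of the unshifted code, where each source symbol `w_k` is
extended from the nonzero elements of `G` by `w_k(0) = 0`. -/
def puncturedSum (d : ι → G) : (ι → {t : G // t ≠ 0} → R) →+ R where
  toFun w := ∑ k, Function.extend Subtype.val (w k) 0 (d k)
  map_zero' := by simp [Function.extend_zero]
  map_add' w w' := by
    rw [← Finset.sum_add_distrib]
    refine Finset.sum_congr rfl fun k _ => ?_
    simpa using congrFun (Function.extend_add Subtype.val (w k) (w' k) 0 0) (d k)

theorem puncturedSum_apply (d : ι → G) (w : ι → {t : G // t ≠ 0} → R) :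
    puncturedSum d w = ∑ k, Function.extend Subtype.val (w k) 0 (d k) :=
  rfl

theorem puncturedSum_zero (w : ι → {t : G // t ≠ 0} → R) :
    puncturedSum (0 : ι → G) w = 0 := by
  simp [puncturedSum_apply]

theorem puncturedSum_update [DecidableEq ι] (d : ι → G) (k : ι) (t : {t : G // t ≠ 0})
    (w : ι → {t : G // t ≠ 0} → R) :
    puncturedSum (Function.update d k t) w = w k t + puncturedSum (Function.update d k 0) w := by
  have hrest : ∀ l ∈ Finset.univ.erase k,
      Function.extend Subtype.val (w l) 0 (Function.update d k t l) =
        Function.extend Subtype.val (w l) 0 (Function.update d k 0 l) := fun l hl => by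
    simp [Finset.ne_of_mem_erase hl]
  simp only [puncturedSum_apply]
  rw [← Finset.add_sum_erase _ _ (Finset.mem_univ k), Finset.sum_congr rfl hrest,
    ← Finset.add_sum_erase _ (fun l => Function.extend Subtype.val (w l) 0
      (Function.update d k 0 l)) (Finset.mem_univ k)]
  simp

theorem puncturedSum_surjective {d : ι → G} (hd : d ≠ 0) :
    Function.Surjective (puncturedSum (R := R) d) := by
  classical
  obtain ⟨k, hk⟩ := Function.ne_iff.1 hd
  intro r
  refine ⟨Pi.single k fun _ => r, ?_⟩
  rw [puncturedSum_apply, Finset.sum_eq_single k]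
  · simpa using Subtype.val_injective.extend_apply (fun _ => r) (0 : G → R)
      (⟨d k, hk⟩ : {t : G // t ≠ 0})
  · intro l _ hl
    simp [hl, Function.extend_zero]
  · simp

end PuncturedSum

section ShiftedSymbol

/-- The values of a source symbol of the shifted code: one value in the unshifted code for each
origin. -/
abbrev ShiftedSource (ι G R : Type*) [Zero G] : Type _ := (ι → G) → {t : G // t ≠ 0} → R

variable {ι G R : Type*} [Fintype ι] [AddCommGroup G]

section AddCommMonoid

variable [AddCommMonoid R]

/-- The coded symbol at position `q` of the shifted code: the copy of the unshifted code with
origin `s` contributes its symbol at `d = q - s`. The copy with `d = 0` contributes nothing and is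
left out, so that the coded symbol is uniformly distributed. -/
def shiftedSymbol (q : ι → G) :
    (ι → ShiftedSource ι G R) →+ ({d : ι → G // d ≠ 0} → R) where
  toFun w d := puncturedSum d.1 fun k => w k (q - d.1)
  map_zero' := funext fun d => map_zero (puncturedSum d.1)
  map_add' _ _ := funext fun d => map_add (puncturedSum d.1) _ _

theorem shiftedSymbol_apply (q : ι → G) (w : ι → ShiftedSource ι G R)
    (d : {d : ι → G // d ≠ 0}) :
    shiftedSymbol q w d = puncturedSum d.1 fun k => w k (q - d.1) :=
  rfl

theorem shiftedSymbol_surjective (q : ι → G) : Function.Surjective (shiftedSymbol (R := R) q) := by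
  classical
  intro f
  choose u hu using fun d : {d : ι → G // d ≠ 0} => puncturedSum_surjective d.2 (f d)
  refine ⟨fun k s => if h : q - s ≠ 0 then u ⟨q - s, h⟩ k else 0, funext fun d => ?_⟩
  simp [shiftedSymbol_apply, d.2, hu]

end AddCommMonoid

theorem eq_of_shiftedSymbol_eq [DecidableEq ι] [Fintype G] [DecidableEq (ι → G)]
    [AddCancelCommMonoid R] {k : ι} {q : ι → G}
    {w w' : ι → ShiftedSource ι G R}
    (h : ∀ r ∈ coordLine k q, shiftedSymbol r w = shiftedSymbol r w') : w k = w' k := by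
  ext s t
  have hcopy : ∀ r ∈ coordLine k q,
      puncturedSum (r - s) (fun l => w l s) = puncturedSum (r - s) (fun l => w' l s) := by
    intro r hr
    by_cases hrs : r - s = 0
    · rw [hrs, puncturedSum_zero, puncturedSum_zero]
    · simpa [shiftedSymbol_apply] using congrFun (h r hr) ⟨r - s, hrs⟩
  have hline : ∀ c, puncturedSum (Function.update (q - s) k c) (fun l => w l s) =
      puncturedSum (Function.update (q - s) k c) (fun l => w' l s) := by
    intro c
    have hsub : Function.update q k (c + s k) - s = Function.update (q - s) k c := by
      simpa using (Function.update_sub q s k (c + s k) (s k)).symm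
    exact hsub ▸ hcopy _ (mem_coordLine.2 ⟨c + s k, rfl⟩)
  have ht := hline t
  rw [puncturedSum_update, puncturedSum_update, hline 0] at ht
  exact add_right_cancel ht

end ShiftedSymbol

/-- The smooth code of length `N ^ K` that achieves capacity. Its positions are the points of
`Fin K → Fin N`, and the decoding sets of the source symbol `k` are the lines in direction `k`. -/
def optimalCode (K N : ℕ) [NeZero N] :
    LDC K N (N ^ K) ((N - 1) * N ^ K : ℝ) (N ^ K - 1 : ℝ) where
  P := FinProbSpace.uniform (Fin K → ShiftedSource (Fin K) (Fin N) (ZMod 2))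
  V := ShiftedSource (Fin K) (Fin N) (ZMod 2)
  V' := {d : Fin K → Fin N // d ≠ 0} → ZMod 2
  W k w := w k
  X m := shiftedSymbol (finFunctionFinEquiv.symm m)
  indep := FinProbSpace.iIndep_uniform_eval
  HW k := by
    refine (FinProbSpace.H_uniform_eval k).trans ?_
    rw [Fintype.card_fun, Nat.cast_pow, Real.logb_pow, logb_two_card_bits]
    simp [mul_comm, Nat.cast_sub NeZero.one_le]
  coded_fn m := ⟨shiftedSymbol (finFunctionFinEquiv.symm m), fun _ => rfl⟩
  HX m := by
    rw [FinProbSpace.H_uniform_of_surjective _ (shiftedSymbol_surjective _), logb_two_card_bits]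
    simp [Fintype.card_subtype_compl, Nat.cast_sub (Nat.one_le_pow K N (NeZero.pos N))]
  decSets k := Finset.univ.image fun q => (coordLine k q).map finFunctionFinEquiv.toEmbedding
  decSets_nonempty k := Finset.univ_nonempty.image _
  decSets_card k S hS := by
    obtain ⟨q, -, rfl⟩ := Finset.mem_image.1 hS
    rw [Finset.card_map, card_coordLine, Fintype.card_fin]
  decodes k S hS := by
    obtain ⟨q, -, rfl⟩ := Finset.mem_image.1 hS
    refine FinProbSpace.condH_eq_zero_of_factorsThrough fun w w' h =>
      eq_of_shiftedSymbol_eq (q := q) fun r hr => ?_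
    simpa [FinProbSpace.tuple] using
      congrFun h ⟨finFunctionFinEquiv r, Finset.mem_map_of_mem _ hr⟩

theorem optimalCode_filter_mem_decSets (K N : ℕ) [NeZero N] (k : Fin K) (m : Fin (N ^ K)) :
    ((optimalCode K N).decSets k).filter (fun S => m ∈ S) =
      {(coordLine k (finFunctionFinEquiv.symm m)).map finFunctionFinEquiv.toEmbedding} := by
  ext S
  simp only [optimalCode, Finset.mem_filter, Finset.mem_image, Finset.mem_univ, true_and,
    Finset.mem_singleton]
  constructor
  · rintro ⟨⟨q, rfl⟩, hm⟩
    rw [coordLine_eq_of_mem (Finset.mem_map_equiv.1 hm)]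
  · rintro rfl
    exact ⟨⟨_, rfl⟩, Finset.mem_map_equiv.2 (self_mem_coordLine _ _)⟩

theorem optimalCode_isSmooth (K N : ℕ) [NeZero N] : (optimalCode K N).IsSmooth := fun k m m' => by
  rw [optimalCode_filter_mem_decSets, optimalCode_filter_mem_decSets, Finset.card_singleton,
    Finset.card_singleton]

theorem sldc_min_length_general (K N : ℕ) (hK : 1 ≤ K) (hN : 2 ≤ N)
    (Q : ∀ {M Lw Lx}, LDC K N M Lw Lx → Prop)
    (hsmooth : ∀ {M Lw Lx} (C : LDC K N M Lw Lx), C.IsSmooth → Q C)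
    (huniversal : ∀ {M Lw Lx} (C : LDC K N M Lw Lx), Q C → C.IsUniversal) :
    IsLeast {M : ℕ | ∃ (Lw Lx : ℝ), 0 < Lw ∧ 0 < Lx ∧
      ∃ C : LDC K N M Lw Lx, Q C ∧ Lw / Lx = Cstar N K} (N ^ K) := by
  have : NeZero N := ⟨by lia⟩
  have hK0 : K ≠ 0 := by lia
  constructor
  · have hN1 : (1 : ℝ) < N := by exact_mod_cast hN
    exact ⟨_, _, mul_pos (sub_pos.2 hN1) (by positivity), sub_pos.2 (one_lt_pow₀ hN1 hK0),
      optimalCode K N, hsmooth _ (optimalCode_isSmooth K N),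
      (Cstar_eq_sub_one_mul_pow_div hN K).symm⟩
  · rintro M ⟨Lw, Lx, hLw, -, C, hC, hrate⟩
    have hLx : Lx = Lw / Cstar N K := by rw [← hrate, div_div_cancel₀ hLw.ne']
    exact (huniversal C hC).pow_le_length hK0 hLw hLx.le

/-- Minimum length of capacity achieving SLDCs: for `N ≥ 2`, `K ≥ 1`, the
least code length `M` for which there exists a perfectly smooth LDC with locality `N`, `K`
source symbols and symbol rate `C*(N, K)` is `N^K`. -/
theorem sldc_min_length (K N : ℕ) (hK : 1 ≤ K) (hN : 2 ≤ N) :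
    IsLeast {M : ℕ | ∃ (Lw Lx : ℝ), 0 < Lw ∧ 0 < Lx ∧
      ∃ C : LDC K N M Lw Lx, C.IsSmooth ∧ Lw / Lx = Cstar N K} (N ^ K) := by
  have : NeZero N := ⟨by lia⟩
  exact sldc_min_length_general K N hK hN LDC.IsSmooth (fun _ => id)
    fun _ => LDC.IsSmooth.isUniversal
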